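/- Let O be a Noetherian integrally closed domain with field of fractions F, let A be an O-algebra that is free and finitely generated as an O-module, and let K be a finite Galois extension of F such that KA := K ⊗_O A is split semisimple, with primitive central idempotents {e_χ : χ ∈ Irr(KA)}. For a prime ideal p of O, write χ ∼_p ψ if e_χ and e_ψ are dominated by the same primitive idempotent of Z(O_p ⊗_O A), where O_p is the localization of O at p. Then two characters χ, ψ ∈ Irr(KA) have e_χ and e_ψ dominated by the same primitive idempotent of Z(A) if and only if there exist a finite sequence χ_0 = χ, χ_1, …, χ_n = ψ in Irr(KA) and prime ideals p_1, …, p_n of O such that χ_{j-1} ∼_{p_j} χ_j for all 1 ≤ j ≤ n. -/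

import Mathlib

open scoped TensorProduct
set_option synthInstance.maxHeartbeats 1000000
set_option maxHeartbeats 1000000

/-- A block of a ring: a primitive idempotent of the center, i.e. a nonzero central idempotent
which cannot be written as a sum of two nonzero orthogonal central idempotents. -/
def IsBlockIdempotent {A : Type*} [Ring A] (e : A) : Prop :=
  e ∈ Subring.center A ∧ IsIdempotentElem e ∧ e ≠ 0 ∧
    ∀ f g : A, f ∈ Subring.center A → g ∈ Subring.center A →
      IsIdempotentElem f → IsIdempotentElem g → f * g = 0 → e = f + g → f = 0 ∨ g = 0

/-- The canonical `O`-algebra map from the localization `O_p` of `O` at a prime ideal `p`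
into `K` (factoring through `F`). -/
noncomputable def localizationAtPrimeToField
    (O : Type) [CommRing O] [IsDomain O]
    (F : Type) [Field F] [Algebra O F] [IsFractionRing O F]
    (K : Type) [Field K] [Algebra F K] [Algebra O K] [IsScalarTower O F K]
    (p : Ideal O) (hp : p.IsPrime) :
    Localization (@Ideal.primeCompl O _ p hp) →ₐ[O] K :=
  IsLocalization.liftAlgHom (M := @Ideal.primeCompl O _ p hp) (f := Algebra.ofId O K) (fun y => by
    haveI := hp
    refine isUnit_iff_ne_zero.mpr fun h0 => ?_
    have hy : (y : O) ∉ p := y.2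
    have hinj : Function.Injective (algebraMap O K) := by
      rw [IsScalarTower.algebraMap_eq O F K]
      exact (algebraMap F K).injective.comp (IsFractionRing.injective O F)
    have hzero : (y : O) = 0 := by
      apply hinj
      simpa [Algebra.ofId] using h0
    exact hy (by rw [hzero]; exact p.zero_mem))

/-- The induced `O`-algebra map `O_p ⊗_O A → K ⊗_O A`. -/
noncomputable def localizationTensorToKTensor
    (O : Type) [CommRing O] [IsDomain O]
    (F : Type) [Field F] [Algebra O F] [IsFractionRing O F]
    (K : Type) [Field K] [Algebra F K] [Algebra O K] [IsScalarTower O F K]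
    (A : Type) [Ring A] [Algebra O A]
    (p : Ideal O) (hp : p.IsPrime) :
    (Localization (@Ideal.primeCompl O _ p hp) ⊗[O] A) →ₐ[O] (K ⊗[O] A) :=
  Algebra.TensorProduct.map (localizationAtPrimeToField O F K p hp) (AlgHom.id O A)

/-- `χ ∼_p ψ` : the primitive central idempotents `e`, `e'` of `K ⊗_O A` are dominated by the
same primitive idempotent (block) of `Z(O_p ⊗_O A)`. -/
def SameLocalBlock
    (O : Type) [CommRing O] [IsDomain O]
    (F : Type) [Field F] [Algebra O F] [IsFractionRing O F]
    (K : Type) [Field K] [Algebra F K] [Algebra O K] [IsScalarTower O F K]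
    (A : Type) [Ring A] [Algebra O A]
    (p : Ideal O) (hp : p.IsPrime) (e e' : K ⊗[O] A) : Prop :=
  ∃ g : Localization (@Ideal.primeCompl O _ p hp) ⊗[O] A, IsBlockIdempotent g ∧
    localizationTensorToKTensor O F K A p hp g * e = e ∧
    localizationTensorToKTensor O F K A p hp g * e' = e'

/-!
The central idempotents of a ring form a Boolean algebra whose atoms are the blocks, and since `A`
and all `A_p` embed into `KA`, their central idempotents form Boolean subalgebras of the one of
`KA`, which is finite because `KA` is Noetherian. Two atoms `e_χ`, `e_ψ` of `KA` lie in the same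
block of a subring if and only if no central idempotent of that subring separates them. Hence
`χ ∼_p ψ` implies that they lie in the same block of `A`. Conversely, the sum `s` of the `e_ψ` for
`ψ` in the chain class of `χ` is a union of blocks of `A_p` for every `p`, so it lies in
`⋂ A_p = A`. As `s` dominates `e_χ`, it dominates every `e_ψ` in the same block of `A` as `e_χ`,
and these `ψ` are therefore in the chain class.
-/

open Relation

section Order

variable {α β : Type*}

theorem exists_isLeast_of_infClosed [SemilatticeInf α] [WellFoundedLT α] {s : Set α}
    (hs : InfClosed s) (hne : s.Nonempty) : ∃ a, IsLeast s a := by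
  obtain ⟨a, ha⟩ := exists_minimal_of_wellFoundedLT (· ∈ s) hne
  exact ⟨a, ha.prop, fun b hb => inf_eq_left.1 (ha.eq_of_le (hs ha.prop hb) inf_le_left)⟩

variable [BooleanAlgebra α] [BooleanAlgebra β]

theorem mem_of_isAtom_of_le_isLUB {C : Set β} {s c : β} (hC : ∀ d ∈ C, IsAtom d) (hs : IsLUB C s)
    (hc : IsAtom c) (hcs : c ≤ s) : c ∈ C := by
  by_contra hmem
  have hsc : s ≤ cᶜ := hs.2 fun d hd =>
    ((hC d hd).disjoint_of_ne hc (ne_of_mem_of_not_mem hd hmem)).le_compl_right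
  exact hc.ne_bot (le_compl_self.1 (hcs.trans hsc))

/-- Every element of the Boolean subalgebra `L` lying above `a` also lies above `b`. For atoms this
says that no element of `L` separates `a` from `b`; it stands for lying below the same atom of `L`,
but is meaningful without a supply of atoms. -/
def LinkedBy (L : BooleanSubalgebra β) (a b : β) : Prop :=
  ∀ z ∈ L, a ≤ z → b ≤ z

theorem LinkedBy.trans {L : BooleanSubalgebra β} {a b c : β} (hab : LinkedBy L a b)
    (hbc : LinkedBy L b c) : LinkedBy L a c :=
  fun z hz haz => hbc z hz (hab z hz haz)

theorem LinkedBy.anti {L M : BooleanSubalgebra β} (hLM : L ≤ M) {a b : β} (h : LinkedBy M a b) :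
    LinkedBy L a b :=
  fun z hz => h z (hLM hz)

theorem LinkedBy.symm {L : BooleanSubalgebra β} {a b : β} (h : LinkedBy L a b) (ha : IsAtom a)
    (hb : b ≠ ⊥) : LinkedBy L b a := by
  intro z hz hbz
  by_contra haz
  have hbz' : b ≤ zᶜ :=
    h zᶜ (L.compl_mem hz) (ha.not_le_iff_disjoint.1 haz).le_compl_right
  exact hb ((le_compl_iff_disjoint_right.1 hbz').eq_bot_of_le hbz)

theorem exists_isAtom_le_map_iff_linkedBy [WellFoundedLT α] (f : BoundedLatticeHom α β) {a b : β}
    (ha : IsAtom a) :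
    (∃ g, IsAtom g ∧ a ≤ f g ∧ b ≤ f g) ↔ LinkedBy ((⊤ : BooleanSubalgebra α).map f) a b := by
  constructor
  · rintro ⟨g, hg, hag, hbg⟩ _ ⟨w, -, rfl⟩ haw
    suffices g ≤ w from hbg.trans (OrderHomClass.mono f this)
    by_contra hgw
    have hdisj : Disjoint (f g) (f w) := (hg.not_le_iff_disjoint.1 hgw).map f
    exact ha.ne_bot (le_bot_iff.1 (hdisj hag haw))
  · intro h
    obtain ⟨g, hag, hleast⟩ : ∃ g, IsLeast {x | a ≤ f x} g :=
      exists_isLeast_of_infClosed (fun x hx y hy => by simpa using ⟨hx, hy⟩) ⟨⊤, by simp⟩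
    refine ⟨g, ⟨?_, fun x hxg => ?_⟩, hag, h _ ⟨g, trivial, rfl⟩ hag⟩
    · rintro rfl
      exact ha.ne_bot (le_bot_iff.1 (by simpa using hag))
    · have hax : a ≤ f xᶜ := by
        rw [map_compl', le_compl_iff_disjoint_right, ← ha.not_le_iff_disjoint]
        exact fun hax => hxg.not_ge (hleast hax)
      exact le_compl_self.1 (hxg.le.trans (hleast hax))

variable [WellFoundedLT β]

theorem exists_isLeast_mem_ge (L : BooleanSubalgebra β) (a : β) :
    ∃ z, IsLeast {z | z ∈ L ∧ a ≤ z} z :=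
  exists_isLeast_of_infClosed (fun _ hx _ hy => ⟨L.infClosed hx.1 hy.1, le_inf hx.2 hy.2⟩)
    ⟨⊤, L.top_mem, le_top⟩

theorem isLUB_mem_of_linkedBy_closed {L : BooleanSubalgebra β} {C : Set β} {s : β}
    (hC : ∀ c ∈ C, IsAtom c) (hclosed : ∀ c ∈ C, ∀ d, IsAtom d → LinkedBy L c d → d ∈ C)
    (hs : IsLUB C s) : s ∈ L := by
  have : IsAtomic β := isAtomic_of_orderBot_wellFounded_lt wellFounded_lt
  obtain ⟨z, ⟨hzL, hsz⟩, hz⟩ := exists_isLeast_mem_ge L s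
  suffices z ≤ s from le_antisymm this hsz ▸ hzL
  refine BooleanAlgebra.le_iff_atom_le_imp.2 fun c hc hcz => hs.1 ?_
  by_contra hcC
  obtain ⟨w, ⟨hwL, hcw⟩, hw⟩ := exists_isLeast_mem_ge L c
  have hCw : ∀ d ∈ C, d ≤ wᶜ := by
    refine fun d hd => ((hC d hd).not_le_iff_disjoint.1 fun hdw => hcC ?_).le_compl_right
    have hcd : LinkedBy L c d := fun x hx hcx => hdw.trans (hw ⟨hx, hcx⟩)
    exact hclosed d hd c hc (hcd.symm hc (hC d hd).ne_bot)
  have hzw : z ≤ wᶜ := hz ⟨L.compl_mem hwL, hs.2 hCw⟩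
  exact hc.ne_bot ((le_compl_iff_disjoint_right.1 (hcz.trans hzw)).eq_bot_of_le hcw)

theorem LinkedBy.mem_of_closed {ι : Sort*} {L : ι → BooleanSubalgebra β} {C : Set β} {a b : β}
    (h : LinkedBy (⨅ i, L i) a b) (hC : ∀ c ∈ C, IsAtom c)
    (hclosed : ∀ i, ∀ c ∈ C, ∀ d, IsAtom d → LinkedBy (L i) c d → d ∈ C) (ha : a ∈ C)
    (hb : IsAtom b) : b ∈ C := by
  obtain ⟨s, hs⟩ : ∃ s, IsLUB C s :=
    exists_isLeast_of_infClosed (fun x hx y hy c hc => le_inf (hx hc) (hy hc))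
      ⟨⊤, fun _ _ => le_top⟩
  have hsL : s ∈ ⨅ i, L i :=
    BooleanSubalgebra.mem_iInf.2 fun i => isLUB_mem_of_linkedBy_closed hC (hclosed i) hs
  exact mem_of_isAtom_of_le_isLUB hC hs hb (h s hsL (hs.1 ha))

theorem linkedBy_iInf_iff_reflTransGen {ι : Sort*} {L : ι → BooleanSubalgebra β} {a b : β}
    (ha : IsAtom a) (hb : IsAtom b) :
    LinkedBy (⨅ i, L i) a b ↔
      ReflTransGen (fun x y => IsAtom x ∧ IsAtom y ∧ ∃ i, LinkedBy (L i) x y) a b := by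
  constructor
  · intro h
    let r (x y : β) : Prop := IsAtom x ∧ IsAtom y ∧ ∃ i, LinkedBy (L i) x y
    have hmem : b ∈ {x | IsAtom x ∧ ReflTransGen r a x} :=
      h.mem_of_closed (fun x hx => hx.1)
        (fun i x hx y hy hxy => ⟨hy, hx.2.tail ⟨hx.1, hy, i, hxy⟩⟩) ⟨ha, .refl⟩ hb
    exact hmem.2
  · intro h
    induction h with
    | refl => exact fun _ _ => id
    | tail _ hxy ih =>
      obtain ⟨hx, -, i, hi⟩ := hxy
      exact (ih hx).trans (hi.anti (iInf_le L i))

end Order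

section Ring

/-- The central idempotents of `R`, with the Boolean algebra structure of the idempotents of the
commutative ring `Subring.center R`: `e ≤ f` means `e * f = e`, and the complement is `1 - e`. -/
abbrev CentralIdempotent (R : Type*) [Ring R] : Type _ :=
  {e : Subring.center R // IsIdempotentElem e}

variable {R S : Type*} [Ring R] [Ring S]

namespace CentralIdempotent

theorem le_iff {e f : CentralIdempotent R} : e ≤ f ↔ (f : R) * e = e := by
  rw [← e.1.2.comm]
  exact Subtype.ext_iff

theorem coe_inj {e f : CentralIdempotent R} : (e : R) = f ↔ e = f := by
  rw [Subtype.coe_inj, Subtype.coe_inj]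

theorem isIdempotentElem_coe (e : CentralIdempotent R) : IsIdempotentElem (e : R) :=
  congrArg Subtype.val e.2

theorem isAtom_iff_isBlockIdempotent {e : CentralIdempotent R} :
    IsAtom e ↔ IsBlockIdempotent (e : R) := by
  constructor
  · refine fun he => ⟨e.1.2, e.isIdempotentElem_coe, fun h => he.ne_bot (coe_inj.1 h), ?_⟩
    intro f g hf _ hfi _ hfg hefg
    let f' : CentralIdempotent R := ⟨⟨f, hf⟩, Subtype.ext hfi⟩
    have hfe : f' ≤ e := by
      have hgf : g * f = 0 := by rw [← hf.comm, hfg]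
      exact le_iff.2 (by rw [hefg, add_mul, hfi, hgf, add_zero])
    rcases he.le_iff.1 hfe with h | h
    · exact .inl (coe_inj.2 h)
    · have hfe : f = e := coe_inj.2 h
      exact .inr (by simpa [hfe] using hefg)
  · rintro ⟨-, -, hne, hprim⟩
    refine ⟨mt coe_inj.2 hne, fun f hf => ?_⟩
    let g : CentralIdempotent R := e ⊓ fᶜ
    have hfg : f ⊓ g = ⊥ := by rw [inf_left_comm, inf_compl_self, inf_bot_eq]
    have hg : (g : R) = e - f := by
      change (e : R) * (1 - f) = e - f
      rw [mul_sub, mul_one, le_iff.1 hf.le]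
    rcases hprim f g f.1.2 g.1.2 f.isIdempotentElem_coe g.isIdempotentElem_coe
      (coe_inj.2 hfg) (by rw [hg, add_sub_cancel]) with h | h
    · exact coe_inj.1 h
    · exact absurd (coe_inj.1 (sub_eq_zero.1 (hg ▸ h))) hf.ne'

/-- The map induced on central idempotents by a ring homomorphism which maps the center into the
center. -/
def map (φ : R →+* S) (hφ : Subring.center R ≤ (Subring.center S).comap φ) :
    BoundedLatticeHom (CentralIdempotent R) (CentralIdempotent S) where
  toFun e := ⟨φ.restrict _ _ hφ e, e.2.map _⟩
  map_sup' e f := Subtype.ext <| by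
    change (φ.restrict _ _ hφ) (e.1 + f.1 - e.1 * f.1) = _
    rw [map_sub, map_add, map_mul]; rfl
  map_inf' e f := Subtype.ext (map_mul (φ.restrict _ _ hφ) e.1 f.1)
  map_top' := Subtype.ext (map_one (φ.restrict _ _ hφ))
  map_bot' := Subtype.ext (map_zero (φ.restrict _ _ hφ))

variable {φ : R →+* S} {hφ : Subring.center R ≤ (Subring.center S).comap φ}

theorem map_injective (hinj : Function.Injective φ) : Function.Injective (map φ hφ) :=
  fun _ _ h => coe_inj.1 (hinj (coe_inj.2 h))

theorem mem_map_top_iff (hinj : Function.Injective φ) {z : CentralIdempotent S} :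
    z ∈ (⊤ : BooleanSubalgebra (CentralIdempotent R)).map (map φ hφ) ↔ (z : S) ∈ φ.range := by
  constructor
  · rintro ⟨x, -, rfl⟩
    exact ⟨x, rfl⟩
  · rintro ⟨x, hx⟩
    have hxc : x ∈ Subring.center R := Subring.mem_center_iff.2 fun y => hinj <| by
      rw [map_mul, map_mul, hx, ← z.1.2.comm]
    have hxi : IsIdempotentElem x := hinj <| by
      rw [map_mul, hx, z.isIdempotentElem_coe]
    exact ⟨⟨⟨x, hxc⟩, Subtype.ext hxi⟩, trivial, coe_inj.1 hx⟩

theorem span_singleton_le_span_singleton {e f : CentralIdempotent R} :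
    Ideal.span {(e : R)} ≤ Ideal.span {(f : R)} ↔ e ≤ f := by
  rw [Ideal.span_singleton_le_iff_mem, Ideal.mem_span_singleton', le_iff, ← e.1.2.comm]
  refine ⟨?_, fun h => ⟨e, h⟩⟩
  rintro ⟨a, ha⟩
  rw [← ha, mul_assoc, f.isIdempotentElem_coe]

instance [IsNoetherianRing R] : WellFoundedLT (CentralIdempotent R) :=
  have : StrictAnti fun e : CentralIdempotent R => Ideal.span {(eᶜ.1 : R)} :=
    strictAnti_of_le_iff_le fun e f => by
      rw [span_singleton_le_span_singleton, compl_le_compl_iff_le]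
  this.wellFoundedLT

theorem wellFoundedLT_of_injective [WellFoundedLT (CentralIdempotent S)] (φ : R →+* S)
    (hφ : Subring.center R ≤ (Subring.center S).comap φ) (hinj : Function.Injective φ) :
    WellFoundedLT (CentralIdempotent R) :=
  ((OrderHomClass.mono (map φ hφ)).strictMono_of_injective (map_injective hinj)).wellFoundedLT

end CentralIdempotent

/-- The elements `e` and `e'` of `S` are dominated by the image under `φ : R →+* S` of the same
block of `R`. -/
def SameBlock (φ : R →+* S) (e e' : S) : Prop :=
  ∃ f, IsBlockIdempotent f ∧ φ f * e = e ∧ φ f * e' = e'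

open CentralIdempotent

theorem IsBlockIdempotent.exists_isAtom {e : R} (he : IsBlockIdempotent e) :
    ∃ E : CentralIdempotent R, IsAtom E ∧ (E : R) = e :=
  ⟨⟨⟨e, he.1⟩, Subtype.ext he.2.1⟩, isAtom_iff_isBlockIdempotent.2 he, rfl⟩

theorem sameBlock_iff_linkedBy [WellFoundedLT (CentralIdempotent R)] {φ : R →+* S}
    (hφ : Subring.center R ≤ (Subring.center S).comap φ) {e e' : CentralIdempotent S}
    (he : IsAtom e) :
    SameBlock φ (e : S) e' ↔
      LinkedBy ((⊤ : BooleanSubalgebra (CentralIdempotent R)).map (map φ hφ)) e e' := by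
  rw [← exists_isAtom_le_map_iff_linkedBy _ he]
  constructor
  · rintro ⟨f, hf, hfe, hfe'⟩
    obtain ⟨g, hg, rfl⟩ := hf.exists_isAtom
    exact ⟨g, hg, le_iff.2 hfe, le_iff.2 hfe'⟩
  · rintro ⟨g, hg, hge, hge'⟩
    exact ⟨g, isAtom_iff_isBlockIdempotent.1 hg, le_iff.1 hge, le_iff.1 hge'⟩

theorem sameBlock_iff_reflTransGen [WellFoundedLT (CentralIdempotent S)] {ι : Type*}
    {T : ι → Type*} [∀ i, Ring (T i)] {φ : R →+* S} {ψ : ∀ i, T i →+* S}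
    (hφ : Function.Injective φ) (hψ : ∀ i, Function.Injective (ψ i))
    (hφc : Subring.center R ≤ (Subring.center S).comap φ)
    (hψc : ∀ i, Subring.center (T i) ≤ (Subring.center S).comap (ψ i))
    (hrange : φ.range = ⨅ i, (ψ i).range) {e e' : S} (he : IsBlockIdempotent e)
    (he' : IsBlockIdempotent e') :
    SameBlock φ e e' ↔
      ReflTransGen (fun x y => IsBlockIdempotent x ∧ IsBlockIdempotent y ∧
        ∃ i, SameBlock (ψ i) x y) e e' := by
  have := wellFoundedLT_of_injective φ hφc hφ
  have := fun i => wellFoundedLT_of_injective (ψ i) (hψc i) (hψ i)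
  have hinf : (⊤ : BooleanSubalgebra _).map (map φ hφc) =
      ⨅ i, (⊤ : BooleanSubalgebra _).map (map (ψ i) (hψc i)) := by
    refine SetLike.ext fun z => ?_
    simp only [BooleanSubalgebra.mem_iInf, mem_map_top_iff hφ, mem_map_top_iff (hψ _), hrange,
      Subring.mem_iInf]
  obtain ⟨e, hea, rfl⟩ := he.exists_isAtom
  obtain ⟨e', hea', rfl⟩ := he'.exists_isAtom
  rw [sameBlock_iff_linkedBy hφc hea, hinf, linkedBy_iInf_iff_reflTransGen hea hea']
  constructor
  · intro h
    refine h.lift (fun x : CentralIdempotent S => (x : S)) fun x y hxy => ?_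
    obtain ⟨hx, hy, i, hi⟩ := hxy
    exact ⟨isAtom_iff_isBlockIdempotent.1 hx, isAtom_iff_isBlockIdempotent.1 hy, i,
      (sameBlock_iff_linkedBy (hψc i) hx).2 hi⟩
  · generalize hy : (e' : S) = y
    intro h
    induction h generalizing e' with
    | refl => rw [coe_inj.1 hy]
    | tail _ hxy ih =>
      obtain ⟨hx, -, i, hi⟩ := hxy
      obtain ⟨x, hxa, rfl⟩ := hx.exists_isAtom
      subst hy
      exact (ih x hxa hx rfl).tail ⟨hxa, hea', i, (sameBlock_iff_linkedBy (hψc i) hxa).1 hi⟩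

end Ring

section Chain

theorem exists_chain_iff_reflTransGen {X : Type*} {P : X → Prop} {r : X → X → Prop} {a b : X}
    (ha : P a) :
    (∃ (n : ℕ) (c : ℕ → X), c 0 = a ∧ c n = b ∧ (∀ j ≤ n, P (c j)) ∧
        ∀ j < n, r (c j) (c (j + 1))) ↔
      ReflTransGen (fun x y => P x ∧ P y ∧ r x y) a b := by
  constructor
  · rintro ⟨n, c, rfl, rfl, hP, hr⟩
    exact (reflTransGen_of_succ_of_le (fun i j => P (c i) ∧ P (c j) ∧ r (c i) (c j))
      (fun j hj => ⟨hP j hj.2.le, hP _ hj.2, hr j hj.2⟩) n.zero_le).lift c fun _ _ => id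
  · intro h
    induction h with
    | refl => exact ⟨0, fun _ => a, rfl, rfl, fun _ _ => ha, by simp⟩
    | @tail x y _ hxy ih =>
      obtain ⟨n, c, h0, rfl, hP, hr⟩ := ih
      refine ⟨n + 1, fun j => if j ≤ n then c j else y, by simp [h0], by simp, ?_, ?_⟩ <;>
        grind

end Chain

section Tensor

open Algebra.TensorProduct

theorem center_le_comap_center_of_one_tmul_mem_range {O L A R : Type*} [CommRing O] [CommRing L]
    [Algebra O L] [Ring A] [Algebra O A] [Ring R] {φ : R →+* L ⊗[O] A}
    (h : ∀ a : A, 1 ⊗ₜ a ∈ φ.range) :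
    Subring.center R ≤ (Subring.center (L ⊗[O] A)).comap φ := by
  refine fun z hz => Subring.mem_center_iff.2 fun x => ?_
  induction x using TensorProduct.induction_on with
  | zero => rw [zero_mul, mul_zero]
  | add x y hx hy => rw [add_mul, mul_add, hx, hy]
  | tmul l a =>
    obtain ⟨r, hr⟩ := h a
    have hla : (l ⊗ₜ a : L ⊗[O] A) = l • φ r := by
      rw [hr, TensorProduct.smul_tmul', smul_eq_mul, mul_one]
    rw [hla, smul_mul_assoc, mul_smul_comm, ← map_mul, ← map_mul, Subring.mem_center_iff.1 hz]

theorem one_tmul_injective_of_flat {O L A : Type*} [CommRing O] [IsDomain O] [Ring L]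
    [Nontrivial L] [Algebra O L] [Module.Flat O L] [AddCommGroup A] [Module O A]
    [Module.IsTorsionFree O A] : Function.Injective fun a : A => (1 : L) ⊗ₜ[O] a := by
  refine (injective_iff_map_eq_zero (TensorProduct.mk O L A 1)).2 fun a ha => ?_
  by_contra hne
  -- Tensoring the embedding `O → A`, `r ↦ r • a`, with `L` keeps it injective.
  have hinj : Function.Injective (LinearMap.toSpanSingleton O A a) :=
    smul_left_injective O hne
  have hone : (1 : L) ⊗ₜ[O] (1 : O) = 0 :=
    Module.Flat.lTensor_preserves_injective_linearMap (M := L) _ hinj <| by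
      simpa using ha
  exact one_ne_zero (α := L) (by simpa using congrArg (TensorProduct.rid O L) hone)

theorem one_tmul_injective_of_isFractionRing {O : Type*} [CommRing O] [IsDomain O] (F : Type*)
    [Field F] [Algebra O F] [IsFractionRing O F] {L A : Type*} [Ring L] [Nontrivial L]
    [Algebra F L] [Algebra O L] [IsScalarTower O F L] [AddCommGroup A] [Module O A]
    [Module.IsTorsionFree O A] : Function.Injective fun a : A => (1 : L) ⊗ₜ[O] a :=
  have : Module.Flat O F := IsLocalization.flat F (nonZeroDivisors O)
  have : Module.Flat O L := Module.Flat.trans O F L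
  one_tmul_injective_of_flat

theorem exists_smul_eq_one_tmul {O : Type*} [CommRing O] (M : Submonoid O) {L A : Type*}
    [CommRing L] [Algebra O L] [IsLocalization M L] [AddCommGroup A] [Module O A]
    (x : L ⊗[O] A) : ∃ u ∈ M, ∃ a : A, u • x = 1 ⊗ₜ a := by
  have : IsLocalizedModule M (TensorProduct.mk O L A 1) :=
    (isLocalizedModule_iff_isBaseChange M L _).2 (TensorProduct.isBaseChange O A L)
  obtain ⟨⟨a, u⟩, hau⟩ := IsLocalizedModule.surj M (TensorProduct.mk O L A 1) x
  exact ⟨u, u.2, a, hau⟩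

variable {O : Type} [CommRing O] [IsDomain O]
  {F : Type} [Field F] [Algebra O F] [IsFractionRing O F]
  {K : Type} [Field K] [Algebra F K] [Algebra O K] [IsScalarTower O F K]
  {A : Type} [Ring A] [Algebra O A]

theorem localizationTensorToKTensor_one_tmul (p : Ideal O) (hp : p.IsPrime) (a : A) :
    localizationTensorToKTensor O F K A p hp (1 ⊗ₜ a) = 1 ⊗ₜ a := by
  rw [localizationTensorToKTensor, map_tmul, map_one, AlgHom.id_apply]

theorem localizationTensorToKTensor_injective [Module.IsTorsionFree O A] (p : Ideal O)
    (hp : p.IsPrime) : Function.Injective (localizationTensorToKTensor O F K A p hp) := by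
  refine (injective_iff_map_eq_zero _).2 fun x hx => ?_
  obtain ⟨u, hu, a, hua⟩ := exists_smul_eq_one_tmul p.primeCompl x
  have ha : (1 : K) ⊗ₜ[O] a = 1 ⊗ₜ 0 := by
    rw [← localizationTensorToKTensor_one_tmul (F := F) p hp, ← hua, map_smul, hx, smul_zero,
      TensorProduct.tmul_zero]
  rw [one_tmul_injective_of_isFractionRing F ha, TensorProduct.tmul_zero,
    ← algebraMap_smul (Localization.AtPrime p)] at hua
  exact (IsLocalization.map_units (Localization.AtPrime p) ⟨u, hu⟩).smul_eq_zero.1 hua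

theorem mem_range_includeRight_of_forall_isPrime {s : K ⊗[O] A}
    (h : ∀ (p : Ideal O) (hp : p.IsPrime), s ∈ (localizationTensorToKTensor O F K A p hp).range) :
    s ∈ (includeRight : A →ₐ[O] K ⊗[O] A).range := by
  let N := Subalgebra.toSubmodule (includeRight : A →ₐ[O] K ⊗[O] A).range
  -- The ideal of denominators of `s` relative to `A` is contained in no prime ideal.
  let I : Ideal O := N.comap (LinearMap.toSpanSingleton O _ s)
  suffices I = ⊤ by simpa [I, N] using (Ideal.eq_top_iff_one I).1 this
  by_contra hI
  obtain ⟨p, hp, hIp⟩ := I.exists_le_maximal hI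
  obtain ⟨x, rfl⟩ := (AlgHom.mem_range _).1 (h p hp.isPrime)
  obtain ⟨u, hu, a, hua⟩ := exists_smul_eq_one_tmul p.primeCompl x
  have huN : u • localizationTensorToKTensor O F K A p hp.isPrime x ∈ N :=
    ⟨a, by rw [← map_smul, hua, localizationTensorToKTensor_one_tmul]; rfl⟩
  exact hu (hIp huN)

end Tensor

theorem blocks_iff_chain_of_local_blocks_general
    (O : Type) [CommRing O] [IsDomain O]
    (F : Type) [Field F] [Algebra O F] [IsFractionRing O F]
    (K : Type) [Field K] [Algebra F K] [Algebra O K] [IsScalarTower O F K]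
    (A : Type) [Ring A] [Algebra O A] [Module.IsTorsionFree O A] [IsNoetherianRing (K ⊗[O] A)]
    (e e' : K ⊗[O] A) (he : IsBlockIdempotent e) (he' : IsBlockIdempotent e') :
    (∃ f : A, IsBlockIdempotent f ∧
      (Algebra.TensorProduct.includeRight f : K ⊗[O] A) * e = e ∧
      (Algebra.TensorProduct.includeRight f : K ⊗[O] A) * e' = e') ↔
    (∃ (n : ℕ) (c : ℕ → K ⊗[O] A), c 0 = e ∧ c n = e' ∧
      (∀ j ≤ n, IsBlockIdempotent (c j)) ∧
      ∀ j < n, ∃ (p : Ideal O) (hp : p.IsPrime),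
        SameLocalBlock O F K A p hp (c j) (c (j + 1))) := by
  let ψ (p : PrimeSpectrum O) := (localizationTensorToKTensor O F K A p.asIdeal p.2).toRingHom
  let φ := (Algebra.TensorProduct.includeRight : A →ₐ[O] K ⊗[O] A).toRingHom
  have hψ (p : PrimeSpectrum O) (a : A) : ψ p (1 ⊗ₜ a) = φ a :=
    localizationTensorToKTensor_one_tmul p.asIdeal p.2 a
  have hrange : φ.range = ⨅ p, (ψ p).range := by
    refine le_antisymm (le_iInf fun p => ?_) fun s hs => ?_
    · rintro _ ⟨a, rfl⟩
      exact ⟨_, hψ p a⟩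
    · rw [Subring.mem_iInf] at hs
      exact mem_range_includeRight_of_forall_isPrime fun p hp => hs ⟨p, hp⟩
  have hlocal (x y : K ⊗[O] A) : (∃ (p : Ideal O) (hp : p.IsPrime),
      SameLocalBlock O F K A p hp x y) ↔ ∃ p, SameBlock (ψ p) x y :=
    ⟨fun ⟨p, hp, h⟩ => ⟨⟨p, hp⟩, h⟩, fun ⟨p, h⟩ => ⟨p.asIdeal, p.2, h⟩⟩
  have hglobal := sameBlock_iff_reflTransGen (one_tmul_injective_of_isFractionRing F)
    (fun p => localizationTensorToKTensor_injective p.asIdeal p.2)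
    (center_le_comap_center_of_one_tmul_mem_range fun a => ⟨a, rfl⟩)
    (fun p => center_le_comap_center_of_one_tmul_mem_range fun a => ⟨_, hψ p a⟩) hrange he he'
  simp only [hlocal]
  exact hglobal.trans (exists_chain_iff_reflTransGen he).symm

/-- With `O` a Noetherian integrally closed domain, `F` its fraction field,
`K/F` finite Galois with `KA := K ⊗_O A` split semisimple: two primitive central idempotents
`e_χ`, `e_ψ` of `KA` are dominated by the same primitive idempotent of `Z(A)` if and only if
there is a finite sequence `χ = χ_0, χ_1, …, χ_n = ψ` in `Irr(KA)` and prime ideals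
`p_1, …, p_n` of `O` with `χ_{j-1} ∼_{p_j} χ_j` for all `j`. -/
theorem blocks_iff_chain_of_local_blocks
    (O : Type) [CommRing O] [IsDomain O] [IsNoetherianRing O] [IsIntegrallyClosed O]
    (F : Type) [Field F] [Algebra O F] [IsFractionRing O F]
    (K : Type) [Field K] [Algebra F K] [FiniteDimensional F K] [IsGalois F K]
    [Algebra O K] [IsScalarTower O F K]
    (A : Type) [Ring A] [Algebra O A] [Module.Finite O A] [Module.Free O A]
    (hsemisimple : IsSemisimpleRing (K ⊗[O] A))
    (hsplit : ∀ (M : Type) (_ : AddCommGroup M) (_ : Module (K ⊗[O] A) M),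
      IsSimpleModule (K ⊗[O] A) M →
        ∀ f : M →ₗ[K ⊗[O] A] M, ∃ c : K, ∀ x : M, f x = algebraMap K (K ⊗[O] A) c • x)
    (e e' : K ⊗[O] A) (he : IsBlockIdempotent e) (he' : IsBlockIdempotent e') :
    (∃ f : A, IsBlockIdempotent f ∧
      (Algebra.TensorProduct.includeRight f : K ⊗[O] A) * e = e ∧
      (Algebra.TensorProduct.includeRight f : K ⊗[O] A) * e' = e') ↔
    (∃ (n : ℕ) (c : ℕ → K ⊗[O] A), c 0 = e ∧ c n = e' ∧
      (∀ j ≤ n, IsBlockIdempotent (c j)) ∧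
      ∀ j < n, ∃ (p : Ideal O) (hp : p.IsPrime),
        SameLocalBlock O F K A p hp (c j) (c (j + 1))) :=
  blocks_iff_chain_of_local_blocks_general O F K A e e' he he'
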